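/- Let J be a Jordan algebra over a field K of characteristic zero, J* its dual space, R_x the multiplication operator R_x(y) = xy, and θ : J × J → J* a bilinear map. Equip the vector space J ⊕ J* with the product (x + f)(y + h) = xy + h∘R_x + f∘R_y + θ(x, y) for x, y ∈ J, f, h ∈ J*. Then: (1) this product makes J ⊕ J* a Jordan algebra if and only if θ is symmetric and satisfies θ(xy, x²) + θ(x, x)∘R_{xy} + θ(x, y)∘R_{x²} = θ(x, yx²) + θ(y, x²)∘R_x + θ(x, x)∘R_y∘R_x for all x, y ∈ J; (2) in that case, the symmetric bilinear form B(x + f, y + h) = f(y) + h(x) on J ⊕ J* is an associative scalar product if and only if θ(x, y)(z) = θ(z, x)(y) for all x, y, z ∈ J. -/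

import Mathlib

variable {K : Type*} [Field K] [CharZero K]
variable {J : Type*} [NonUnitalNonAssocCommRing J] [Module K J]
  [SMulCommClass K J J] [IsScalarTower K J J] [FiniteDimensional K J]

/-- The product of the `T*`-extension on `J ⊕ J*`:
`(x + f)(y + h) = xy + h∘R_x + f∘R_y + θ(x, y)`. -/
noncomputable def tstarMul (θ : J →ₗ[K] J →ₗ[K] Module.Dual K J)
    (p q : J × Module.Dual K J) : J × Module.Dual K J :=
  (p.1 * q.1,
    q.2.comp (LinearMap.mulLeft K p.1) + p.2.comp (LinearMap.mulLeft K q.1) + θ p.1 q.1)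

/-- The canonical hyperbolic bilinear form `B (x + f, y + h) = f y + h x` on `J ⊕ J*`. -/
noncomputable def tstarForm (p q : J × Module.Dual K J) : K :=
  p.2 q.1 + q.2 p.1

/-- The component of the Jordan identity that is quadratic in `x` and linear in `z`. -/
theorem jordan_linearized (K : Type*) {J : Type*} [Field K] [CharZero K]
    [NonUnitalNonAssocCommRing J] [Module K J]
    (hjordan : ∀ x y : J, (x * y) * (x * x) = x * (y * (x * x))) (x y z : J) :
    (z * y) * (x * x) + (2 : K) • ((x * y) * (x * z)) =
      z * (y * (x * x)) + (2 : K) • (x * (y * (x * z))) := by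
  have hadd := hjordan (x + z) y
  have hsub := hjordan (x - z) y
  have hz := hjordan z y
  simp only [mul_add, add_mul, mul_sub, sub_mul, mul_comm z x] at hadd hsub
  apply smul_right_injective J (two_ne_zero (α := K))
  simp only [two_smul]
  rw [← sub_eq_zero] at hadd hsub hz ⊢
  have hcomb := congrArg₂ (· - ·) (congrArg₂ (· - ·) hadd hsub) (congrArg₂ (· + ·) hz hz)
  simp only [sub_zero, add_zero] at hcomb
  rw [← hcomb]
  abel

/-- The operator identity
`2 R_x R_{xy} + R_y R_{x²} = 2 R_x R_y R_x + R_{y x²}` of a Jordan algebra. -/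
theorem jordan_operator_identity (K : Type*) {J : Type*} [Field K] [CharZero K]
    [NonUnitalNonAssocCommRing J] [Module K J]
    (hjordan : ∀ x y : J, (x * y) * (x * x) = x * (y * (x * x))) (x y z : J) :
    (2 : K) • (x * ((x * y) * z)) + y * ((x * x) * z) =
      (2 : K) • (x * (y * (x * z))) + (y * (x * x)) * z := by
  have h₁ := jordan_linearized K hjordan x y z
  have h₂ := jordan_linearized K hjordan x z y
  rw [mul_comm y z, mul_comm (x * z) (x * y), h₁] at h₂
  rw [mul_comm (x * y) z, mul_comm (x * x) z, mul_comm (y * (x * x)) z, add_comm,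
    ← h₂, add_comm]

/-- T*-extension: (1) the product above makes `J ⊕ J*` a Jordan algebra iff
`θ` is symmetric and satisfies identity (id1); (2) in that case, the bilinear form
`B(x+f, y+h) = f y + h x` is an associative scalar product iff `θ x y z = θ z x y`. -/
theorem tstar_extension
    (hjordan : ∀ x y : J, (x * y) * (x * x) = x * (y * (x * x)))
    (θ : J →ₗ[K] J →ₗ[K] Module.Dual K J) :
    -- (1)
    (((∀ p q, tstarMul θ p q = tstarMul θ q p) ∧
      (∀ p q, tstarMul θ (tstarMul θ p q) (tstarMul θ p p) =
          tstarMul θ p (tstarMul θ q (tstarMul θ p p)))) ↔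
      ((∀ x y : J, θ x y = θ y x) ∧
        (∀ x y : J,
          θ (x * y) (x * x) + (θ x x).comp (LinearMap.mulLeft K (x * y)) +
              (θ x y).comp (LinearMap.mulLeft K (x * x)) =
            θ x (y * (x * x)) + (θ y (x * x)).comp (LinearMap.mulLeft K x) +
              (θ x x).comp ((LinearMap.mulLeft K y).comp (LinearMap.mulLeft K x))))) ∧
    -- (2)
    (((∀ x y : J, θ x y = θ y x) ∧
      (∀ x y : J,
        θ (x * y) (x * x) + (θ x x).comp (LinearMap.mulLeft K (x * y)) +
            (θ x y).comp (LinearMap.mulLeft K (x * x)) =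
          θ x (y * (x * x)) + (θ y (x * x)).comp (LinearMap.mulLeft K x) +
            (θ x x).comp ((LinearMap.mulLeft K y).comp (LinearMap.mulLeft K x)))) →
      (((∀ p q : J × Module.Dual K J, tstarForm p q = tstarForm q p) ∧
        (∀ p : J × Module.Dual K J, (∀ q, tstarForm p q = 0) → p = 0) ∧
        (∀ p q s : J × Module.Dual K J,
          tstarForm (tstarMul θ p q) s = tstarForm p (tstarMul θ q s))) ↔
        (∀ x y z : J, θ x y z = θ z x y))) := by
  have hsymm : (∀ p q, tstarMul θ p q = tstarMul θ q p) ↔ ∀ x y : J, θ x y = θ y x := by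
    constructor
    · intro h x y
      simpa [tstarMul] using congrArg Prod.snd (h (x, 0) (y, 0))
    · intro h p q
      ext1
      · exact mul_comm _ _
      · simp only [tstarMul, h p.1 q.1, add_comm (q.2.comp _)]
  refine ⟨and_congr hsymm ⟨fun h x y => ?_, fun h p q => ?_⟩, fun _ => ⟨fun h x y z => ?_,
    fun h => ⟨fun p q => add_comm _ _, fun p hp => ?_, fun p q s => ?_⟩⟩⟩
  · have hxy := congrArg Prod.snd (h (x, 0) (y, 0))
    ext z
    have hz := LinearMap.congr_fun hxy z
    simp only [tstarMul, LinearMap.add_apply, LinearMap.comp_apply, LinearMap.mulLeft_apply,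
      LinearMap.zero_apply] at hz ⊢
    linear_combination hz
  · obtain ⟨x, f⟩ := p
    obtain ⟨y, g⟩ := q
    ext1
    · exact hjordan x y
    · ext z
      have hz := LinearMap.congr_fun (h x y) z
      have hf := congrArg f (jordan_operator_identity K hjordan x y z)
      have hg : g (x * (x * x * z)) = g (x * x * (x * z)) := by
        rw [mul_comm (x * x) z, ← hjordan, mul_comm]
      simp only [map_add, map_smul, smul_eq_mul] at hf
      simp only [tstarMul, LinearMap.add_apply, LinearMap.comp_apply,
        LinearMap.mulLeft_apply] at hz ⊢
      linear_combination hz + hf + hg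
  · simpa [tstarForm, tstarMul] using (h.2.2 (z, 0) (x, 0) (y, 0)).symm
  · refine Prod.ext ?_ ?_
    · refine (Module.forall_dual_apply_eq_zero_iff K p.1).1 fun f => ?_
      simpa [tstarForm] using hp (0, f)
    · ext x
      simpa [tstarForm] using hp (x, 0)
  · have hcyc := h p.1 q.1 s.1
    have hcyc' := h s.1 p.1 q.1
    simp only [tstarForm, tstarMul, LinearMap.add_apply, LinearMap.comp_apply,
      LinearMap.mulLeft_apply]
    rw [mul_comm s.1 p.1, mul_comm q.1 p.1]
    linear_combination hcyc + hcyc'
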